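/- Let A be a commutative Arens regular Banach algebra such that A** (with the Arens product) is semisimple. Then A is 2-ideally amenable. -/

import Mathlib

/- ## Core definitions: Banach bimodules over (non-unital) complex Banach algebras,
iterated dual modules, derivations, ideal amenability, and Arens extensions. -/

noncomputable section

open ContinuousLinearMap

universe u

/-- The topological dual of a complex normed space. -/
abbrev Dl (X : Type u) [SeminormedAddCommGroup X] [NormedSpace ℂ X] : Type u := X →L[ℂ] ℂ

/-- The canonical embedding of a normed space into its double dual. -/
def inclDD (X : Type u) [SeminormedAddCommGroup X] [NormedSpace ℂ X] : X →L[ℂ] Dl (Dl X) :=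
  ContinuousLinearMap.apply ℂ ℂ

@[simp] lemma inclDD_apply {X : Type u} [SeminormedAddCommGroup X] [NormedSpace ℂ X]
    (x : X) (f : Dl X) : inclDD X x f = f x := rfl

/-- A (bounded) Banach bimodule structure of a complex Banach algebra `A`
on a complex Banach space `X`:  `l a x = a • x` and `r a x = x • a`. -/
structure Bimodule (A : Type u) [NonUnitalNormedRing A] [NormedSpace ℂ A]
    [SMulCommClass ℂ A A] [IsScalarTower ℂ A A]
    (X : Type u) [NormedAddCommGroup X] [NormedSpace ℂ X] : Type u where
  l : A →L[ℂ] X →L[ℂ] X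
  r : A →L[ℂ] X →L[ℂ] X
  l_mul : ∀ a b x, l (a * b) x = l a (l b x)
  r_mul : ∀ a b x, r (a * b) x = r b (r a x)
  lr : ∀ a b x, l a (r b x) = r b (l a x)

variable {A : Type u} [NonUnitalNormedRing A] [NormedSpace ℂ A]
  [SMulCommClass ℂ A A] [IsScalarTower ℂ A A]

/-- The dual module of a Banach bimodule: `(a·f)(x) = f(x·a)` and `(f·a)(x) = f(a·x)`. -/
def Bimodule.dualMod {X : Type u} [NormedAddCommGroup X] [NormedSpace ℂ X]
    (M : Bimodule A X) : Bimodule A (Dl X) where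
  l := ((ContinuousLinearMap.compL ℂ X X ℂ).flip).comp M.r
  r := ((ContinuousLinearMap.compL ℂ X X ℂ).flip).comp M.l
  l_mul := fun a b f => by
    ext x
    simp [M.r_mul]
  r_mul := fun a b f => by
    ext x
    simp [M.l_mul]
  lr := fun a b f => by
    ext x
    simp [M.lr]

@[simp] lemma Bimodule.dualMod_l_apply {X : Type u} [NormedAddCommGroup X] [NormedSpace ℂ X]
    (M : Bimodule A X) (a : A) (f : Dl X) (x : X) :
    M.dualMod.l a f x = f (M.r a x) := by
  simp [Bimodule.dualMod]

@[simp] lemma Bimodule.dualMod_r_apply {X : Type u} [NormedAddCommGroup X] [NormedSpace ℂ X]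
    (M : Bimodule A X) (a : A) (f : Dl X) (x : X) :
    M.dualMod.r a f x = f (M.l a x) := by
  simp [Bimodule.dualMod]

/-- A Banach `A`-bimodule, bundled with its underlying space. -/
structure BMod (A : Type u) [NonUnitalNormedRing A] [NormedSpace ℂ A]
    [SMulCommClass ℂ A A] [IsScalarTower ℂ A A] : Type (u + 1) where
  X : Type u
  [xGroup : NormedAddCommGroup X]
  [xSpace : NormedSpace ℂ X]
  act : Bimodule A X

attribute [instance] BMod.xGroup BMod.xSpace

/-- The dual of a bundled Banach bimodule. -/
def BMod.dualObj (M : BMod A) : BMod A :=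
  ⟨Dl M.X, M.act.dualMod⟩

/-- The `n`-th dual of a bundled Banach bimodule (`iter 0 = M`). -/
def BMod.iter (M : BMod A) : ℕ → BMod A
  | 0 => M
  | n + 1 => (M.iter n).dualObj

/-- A bounded derivation from `A` into the Banach `A`-bimodule `M`. -/
def IsDerivation (M : BMod A) (D : A →L[ℂ] M.X) : Prop :=
  ∀ a b : A, D (a * b) = M.act.l a (D b) + M.act.r b (D a)

/-- An inner derivation.  -/
def IsInner (M : BMod A) (D : A →L[ℂ] M.X) : Prop :=
  ∃ x : M.X, ∀ a : A, D a = M.act.l a x - M.act.r a x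

/-- `H¹(A, M) = {0}` : every bounded derivation into `M` is inner. -/
def H1Zero (M : BMod A) : Prop :=
  ∀ D : A →L[ℂ] M.X, IsDerivation M D → IsInner M D

/-- A closed two-sided ideal of the Banach algebra `A`. -/
structure ClosedIdeal (A : Type u) [NonUnitalNormedRing A] [NormedSpace ℂ A]
    [SMulCommClass ℂ A A] [IsScalarTower ℂ A A] : Type u where
  car : Submodule ℂ A
  isClosed : IsClosed (car : Set A)
  mul_mem_left : ∀ (a x : A), x ∈ car → a * x ∈ car
  mul_mem_right : ∀ (a x : A), x ∈ car → x * a ∈ car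

namespace ClosedIdeal

variable (I : ClosedIdeal A)

/-- Left multiplication action of `A` on a closed two-sided ideal. -/
def lAct : A →L[ℂ] ↥I.car →L[ℂ] ↥I.car :=
  LinearMap.mkContinuous₂
    (LinearMap.mk₂ ℂ
      (fun a x => (⟨a * (x : A), I.mul_mem_left a x x.2⟩ : ↥I.car))
      (fun a b x => Subtype.ext <| by simp [add_mul])
      (fun c a x => Subtype.ext <| by simp [smul_mul_assoc])
      (fun a x y => Subtype.ext <| by simp [mul_add])
      (fun c a x => Subtype.ext <| by simp [mul_smul_comm]))
    1
    (fun a x => by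
      simp only [LinearMap.mk₂_apply, one_mul]
      calc ‖(⟨a * (x : A), I.mul_mem_left a x x.2⟩ : ↥I.car)‖ = ‖a * (x : A)‖ := rfl
        _ ≤ ‖a‖ * ‖(x : A)‖ := norm_mul_le _ _
        _ = ‖a‖ * ‖x‖ := by rw [Submodule.coe_norm])

/-- Right multiplication action of `A` on a closed two-sided ideal. -/
def rAct : A →L[ℂ] ↥I.car →L[ℂ] ↥I.car :=
  LinearMap.mkContinuous₂
    (LinearMap.mk₂ ℂ
      (fun a x => (⟨(x : A) * a, I.mul_mem_right a x x.2⟩ : ↥I.car))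
      (fun a b x => Subtype.ext <| by simp [mul_add])
      (fun c a x => Subtype.ext <| by simp [mul_smul_comm])
      (fun a x y => Subtype.ext <| by simp [add_mul])
      (fun c a x => Subtype.ext <| by simp [smul_mul_assoc]))
    1
    (fun a x => by
      simp only [LinearMap.mk₂_apply, one_mul]
      calc ‖(⟨(x : A) * a, I.mul_mem_right a x x.2⟩ : ↥I.car)‖ = ‖(x : A) * a‖ := rfl
        _ ≤ ‖(x : A)‖ * ‖a‖ := norm_mul_le _ _
        _ = ‖x‖ * ‖a‖ := by rw [Submodule.coe_norm]
        _ = ‖a‖ * ‖x‖ := mul_comm _ _)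

@[simp] lemma lAct_apply (a : A) (x : ↥I.car) : (I.lAct a x : A) = a * (x : A) := rfl
@[simp] lemma rAct_apply (a : A) (x : ↥I.car) : (I.rAct a x : A) = (x : A) * a := rfl

/-- A closed two-sided ideal as a Banach `A`-bimodule. -/
def toBMod : BMod A where
  X := ↥I.car
  act :=
    { l := I.lAct
      r := I.rAct
      l_mul := fun a b x => Subtype.ext <| by simp [mul_assoc]
      r_mul := fun a b x => Subtype.ext <| by simp [mul_assoc]
      lr := fun a b x => Subtype.ext <| by simp [mul_assoc] }

end ClosedIdeal

/-- The Banach algebra `A` as a Banach bimodule over itself. -/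
def regBMod (A : Type u) [NonUnitalNormedRing A] [NormedSpace ℂ A]
    [SMulCommClass ℂ A A] [IsScalarTower ℂ A A] : BMod A where
  X := A
  act :=
    { l := ContinuousLinearMap.mul ℂ A
      r := (ContinuousLinearMap.mul ℂ A).flip
      l_mul := fun a b x => by simp [mul_assoc]
      r_mul := fun a b x => by simp [mul_assoc]
      lr := fun a b x => by simp [mul_assoc] }

/-- `A` is `n`-`I`-weakly amenable: `H¹(A, I⁽ⁿ⁾) = {0}`. -/
def NIWeaklyAmenable (I : ClosedIdeal A) (n : ℕ) : Prop :=
  H1Zero (I.toBMod.iter n)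

/-- `A` is `n`-ideally amenable. -/
def NIdeallyAmenable (A : Type u) [NonUnitalNormedRing A] [NormedSpace ℂ A]
    [SMulCommClass ℂ A A] [IsScalarTower ℂ A A] (n : ℕ) : Prop :=
  ∀ I : ClosedIdeal A, H1Zero (I.toBMod.iter n)

/-- `A` is `n`-weakly amenable: `H¹(A, A⁽ⁿ⁾) = {0}`. -/
def NWeaklyAmenable (A : Type u) [NonUnitalNormedRing A] [NormedSpace ℂ A]
    [SMulCommClass ℂ A A] [IsScalarTower ℂ A A] (n : ℕ) : Prop :=
  H1Zero ((regBMod A).iter n)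

/- ## Arens-type extensions of bounded bilinear maps to biduals -/

section Arens

variable {E F G : Type*}
  [SeminormedAddCommGroup E] [NormedSpace ℂ E]
  [SeminormedAddCommGroup F] [NormedSpace ℂ F]
  [SeminormedAddCommGroup G] [NormedSpace ℂ G]

/-- Auxiliary map for the Arens extension:
`arT b Ψ g = (e ↦ Ψ (g ∘ b e))`. -/
def arT (b : E →L[ℂ] F →L[ℂ] G) (Ψ : Dl (Dl F)) (g : Dl G) : Dl E :=
  LinearMap.mkContinuous
    { toFun := fun e => Ψ (g.comp (b e))
      map_add' := fun e e' => by simp only [map_add, ContinuousLinearMap.comp_add, map_add]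
      map_smul' := fun c e => by
        simp only [map_smul, ContinuousLinearMap.comp_smul, map_smul, RingHom.id_apply] }
    (‖Ψ‖ * ‖g‖ * ‖b‖)
    (fun e => by
      calc ‖Ψ (g.comp (b e))‖ ≤ ‖Ψ‖ * ‖g.comp (b e)‖ := Ψ.le_opNorm _
        _ ≤ ‖Ψ‖ * (‖g‖ * ‖b e‖) := by gcongr; exact g.opNorm_comp_le _
        _ ≤ ‖Ψ‖ * (‖g‖ * (‖b‖ * ‖e‖)) := by gcongr; exact b.le_opNorm e
        _ = ‖Ψ‖ * ‖g‖ * ‖b‖ * ‖e‖ := by ring)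

@[simp] lemma arT_apply (b : E →L[ℂ] F →L[ℂ] G) (Ψ : Dl (Dl F)) (g : Dl G)
    (e : E) : arT b Ψ g e = Ψ (g.comp (b e)) := rfl

lemma arT_add_right (b : E →L[ℂ] F →L[ℂ] G) (Ψ Ψ' : Dl (Dl F)) (g : Dl G) :
    arT b (Ψ + Ψ') g = arT b Ψ g + arT b Ψ' g := by
  ext e; simp

lemma arT_smul_right (b : E →L[ℂ] F →L[ℂ] G) (c : ℂ) (Ψ : Dl (Dl F)) (g : Dl G) :
    arT b (c • Ψ) g = c • arT b Ψ g := by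
  ext e; simp

lemma arT_add_g (b : E →L[ℂ] F →L[ℂ] G) (Ψ : Dl (Dl F)) (g g' : Dl G) :
    arT b Ψ (g + g') = arT b Ψ g + arT b Ψ g' := by
  ext e; simp [ContinuousLinearMap.add_comp]

lemma arT_smul_g (b : E →L[ℂ] F →L[ℂ] G) (c : ℂ) (Ψ : Dl (Dl F)) (g : Dl G) :
    arT b Ψ (c • g) = c • arT b Ψ g := by
  ext e; simp [ContinuousLinearMap.smul_comp]

/-- One half of the Arens extension: `(arExtFun b Φ Ψ) g = Φ (e ↦ Ψ (g ∘ b e))`. -/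
def arExtFun (b : E →L[ℂ] F →L[ℂ] G) (Φ : Dl (Dl E)) (Ψ : Dl (Dl F)) :
    Dl (Dl G) :=
  LinearMap.mkContinuous
    { toFun := fun g => Φ (arT b Ψ g)
      map_add' := fun g g' => by simp only [arT_add_g, map_add]
      map_smul' := fun c g => by simp only [arT_smul_g, map_smul, RingHom.id_apply] }
    (‖Φ‖ * ‖Ψ‖ * ‖b‖)
    (fun g => by
      calc ‖Φ (arT b Ψ g)‖ ≤ ‖Φ‖ * ‖arT b Ψ g‖ := Φ.le_opNorm _
        _ ≤ ‖Φ‖ * (‖Ψ‖ * ‖g‖ * ‖b‖) := by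
            gcongr
            exact LinearMap.mkContinuous_norm_le _ (by positivity) _
        _ = ‖Φ‖ * ‖Ψ‖ * ‖b‖ * ‖g‖ := by ring)

@[simp] lemma arExtFun_apply (b : E →L[ℂ] F →L[ℂ] G) (Φ : Dl (Dl E))
    (Ψ : Dl (Dl F)) (g : Dl G) : arExtFun b Φ Ψ g = Φ (arT b Ψ g) := rfl

lemma arExtFun_norm_le (b : E →L[ℂ] F →L[ℂ] G) (Φ : Dl (Dl E))
    (Ψ : Dl (Dl F)) : ‖arExtFun b Φ Ψ‖ ≤ ‖Φ‖ * ‖Ψ‖ * ‖b‖ :=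
  LinearMap.mkContinuous_norm_le _ (by positivity) _

/-- The (first-)Arens-type extension of a bounded bilinear map `b : E × F → G` to the
biduals, obtained by iterated weak* limits (outer limit in the first variable):
`(arExt b Φ Ψ) g = Φ (e ↦ Ψ (g ∘ b e))`. -/
def arExt (b : E →L[ℂ] F →L[ℂ] G) :
    Dl (Dl E) →L[ℂ] Dl (Dl F) →L[ℂ] Dl (Dl G) :=
  LinearMap.mkContinuous₂
    (LinearMap.mk₂ ℂ (arExtFun b)
      (fun Φ Φ' Ψ => by ext g; simp)
      (fun c Φ Ψ => by ext g; simp)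
      (fun Φ Ψ Ψ' => by ext g; simp [arT_add_right])
      (fun c Φ Ψ => by ext g; simp [arT_smul_right]))
    ‖b‖
    (fun Φ Ψ => by
      simp only [LinearMap.mk₂_apply]
      exact (arExtFun_norm_le b Φ Ψ).trans (le_of_eq (by ring)))

@[simp] lemma arExt_apply (b : E →L[ℂ] F →L[ℂ] G) (Φ : Dl (Dl E))
    (Ψ : Dl (Dl F)) (g : Dl G) : arExt b Φ Ψ g = Φ (arT b Ψ g) := rfl

end Arens

/- ## Arens products and Arens module extensions -/

/-- The first Arens product on the bidual of a Banach algebra. -/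
def arensMul (A : Type u) [NonUnitalNormedRing A] [NormedSpace ℂ A]
    [SMulCommClass ℂ A A] [IsScalarTower ℂ A A] :
    Dl (Dl A) →L[ℂ] Dl (Dl A) →L[ℂ] Dl (Dl A) :=
  arExt (ContinuousLinearMap.mul ℂ A)

/-- The second Arens product on the bidual of a Banach algebra. -/
def arensMul₂ (A : Type u) [NonUnitalNormedRing A] [NormedSpace ℂ A]
    [SMulCommClass ℂ A A] [IsScalarTower ℂ A A]
    (F G : Dl (Dl A)) : Dl (Dl A) :=
  arExt (ContinuousLinearMap.mul ℂ A).flip G F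

namespace Bimodule

variable {X : Type u} [NormedAddCommGroup X] [NormedSpace ℂ X]

/-- First (iterated weak*-limit) extension of the left action:
`a'' · x'' = w*-lim_i lim_j a_i • x_j`. -/
def lExt (M : Bimodule A X) (F : Dl (Dl A)) (ξ : Dl (Dl X)) :
    Dl (Dl X) :=
  arExt M.l F ξ

/-- Second extension of the left action: `a'' · x'' = w*-lim_j lim_i a_i • x_j`. -/
def lExt₂ (M : Bimodule A X) (F : Dl (Dl A)) (ξ : Dl (Dl X)) :
    Dl (Dl X) :=
  arExt M.l.flip ξ F

/-- First (iterated weak*-limit) extension of the right action: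
`x'' · a'' = w*-lim_j lim_i x_j • a_i`. -/
def rExt (M : Bimodule A X) (ξ : Dl (Dl X)) (F : Dl (Dl A)) :
    Dl (Dl X) :=
  arExt M.r.flip ξ F

/-- Second extension of the right action: `x'' · a'' = w*-lim_i lim_j x_j • a_i`. -/
def rExt₂ (M : Bimodule A X) (ξ : Dl (Dl X)) (F : Dl (Dl A)) :
    Dl (Dl X) :=
  arExt M.r F ξ

/-- The topological centre of the right module action of `A` on `X`, i.e. the set of
`x'' ∈ X**` such that `a'' ↦ x'' · a''` is weak*-weak* continuous. -/
def rTopCenter (M : Bimodule A X) : Set (Dl (Dl X)) :=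
  {ξ | Continuous fun F : WeakDual ℂ (Dl A) => (M.rExt ξ F : WeakDual ℂ (Dl X))}

end Bimodule

/-- The topological centre of the bidual of a Banach algebra (with the first
Arens product): the set of `F ∈ A**` for which `G ↦ F □ G` is weak*-weak* continuous. -/
def arensTopCenter (A : Type u) [NonUnitalNormedRing A] [NormedSpace ℂ A]
    [SMulCommClass ℂ A A] [IsScalarTower ℂ A A] : Set (Dl (Dl A)) :=
  {F | Continuous fun G : WeakDual ℂ (Dl A) => (arensMul A F G : WeakDual ℂ (Dl A))}

/- ## Adjoint maps -/

section DMap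

variable {E F : Type*} [SeminormedAddCommGroup E] [NormedSpace ℂ E]
  [SeminormedAddCommGroup F] [NormedSpace ℂ F]

/-- The adjoint (dual map) of a bounded operator. -/
def dMap (f : E →L[ℂ] F) : Dl F →L[ℂ] Dl E :=
  (ContinuousLinearMap.compL ℂ E F ℂ).flip f

@[simp] lemma dMap_apply (f : E →L[ℂ] F) (g : Dl F) : dMap f g = g.comp f := rfl

/-- The canonical projection `X⁽⁴⁾ → X⁽²⁾`, i.e. the adjoint of the canonical
embedding `X* → X***`. -/
def Pmap (X : Type u) [SeminormedAddCommGroup X] [NormedSpace ℂ X] :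
    Dl (Dl (Dl (Dl X))) →L[ℂ] Dl (Dl X) :=
  dMap (inclDD (Dl X))

end DMap


/-!
A bounded derivation `D : A → A**` of a commutative Banach algebra extends weak*-continuously to
`D̃ : A** → A**`, and `D̃ (a □ F) = a □ D̃ F + F □ D a` for `a ∈ A`. Write `L` and `R` for left and
right multiplication by an element of `(A**, □)`. For every `G` the identity reads
`R (G □ D a) = [D̃ ∘ R G, L a]`, and this commutator commutes with `L a` because `□` is associative.
By the Kleinecke–Shirokov theorem it is quasinilpotent, so `G □ D a` is left quasi-regular. Hence
`D a` lies in the Jacobson radical of `A**`, and `D = 0` if `A**` is semisimple.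

For a closed ideal `I`, the second adjoint of the inclusion `I → A` is an injective bimodule
homomorphism `I** → A**`, so derivations into `I**` vanish too.
-/

section BoundedDerivations

lemma iterate_succ_mul_of_leibniz {R F : Type*} [Ring R] [FunLike F R R] [AddMonoidHomClass F R R]
    {d : F} (leibniz : ∀ x y, d (x * y) = d x * y + x * d y) {s : R} (hs : d (d s) = 0)
    (n : ℕ) (x : R) :
    d^[n + 1] (s * x) = s * d^[n + 1] x + (n + 1) • (d s * d^[n] x) := by
  induction n with
  | zero => simp [leibniz, add_comm]
  | succ n ih =>
    simp only [Function.iterate_succ_apply' d] at ih ⊢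
    rw [ih, map_add, map_nsmul, leibniz s, leibniz (d s), hs, zero_mul, zero_add,
      succ_nsmul _ (n + 1)]
    abel

lemma iterate_pow_eq_factorial_nsmul {R F : Type*} [Ring R] [FunLike F R R]
    [AddMonoidHomClass F R R] {d : F} (leibniz : ∀ x y, d (x * y) = d x * y + x * d y)
    {s : R} (hs : d (d s) = 0) (n : ℕ) :
    d^[n] (s ^ n) = n.factorial • d s ^ n := by
  suffices d^[n] (s ^ n) = n.factorial • d s ^ n ∧ d^[n + 1] (s ^ n) = 0 from this.1
  induction n with
  | zero => simpa using leibniz 1 1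
  | succ n ih =>
    obtain ⟨ih, ih_zero⟩ := ih
    simp only [pow_succ' s, iterate_succ_mul_of_leibniz leibniz hs]
    constructor
    · rw [ih_zero, ih, mul_zero, zero_add, mul_smul_comm, ← pow_succ', ← mul_smul,
        Nat.factorial_succ]
    · rw [Function.iterate_succ_apply' d, ih_zero, map_zero, mul_zero, mul_zero, smul_zero,
        add_zero]

variable {𝕜 R : Type*} [RCLike 𝕜] [NormedRing R] [NormedAlgebra 𝕜 R]

lemma norm_apply_pow_le_div_factorial {d : R →L[𝕜] R}
    (leibniz : ∀ x y, d (x * y) = d x * y + x * d y) {s : R} (hs : d (d s) = 0)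
    {n : ℕ} (hn : 0 < n) :
    ‖d s ^ n‖ ≤ (‖d‖ * ‖s‖) ^ n / n.factorial := by
  rw [le_div_iff₀' (by positivity)]
  calc n.factorial * ‖d s ^ n‖ = ‖(d ^ n) (s ^ n)‖ := by
        rw [FunLike.coe_pow_eq_iterate, iterate_pow_eq_factorial_nsmul leibniz hs,
          RCLike.norm_nsmul 𝕜, nsmul_eq_mul]
    _ ≤ ‖d ^ n‖ * ‖s ^ n‖ := (d ^ n).le_opNorm _
    _ ≤ ‖d‖ ^ n * ‖s‖ ^ n := by
        gcongr
        exacts [norm_pow_le' d hn, norm_pow_le' s hn]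
    _ = (‖d‖ * ‖s‖) ^ n := (mul_pow ..).symm

theorem isTopologicallyNilpotent_apply_of_leibniz {d : R →L[𝕜] R}
    (leibniz : ∀ x y, d (x * y) = d x * y + x * d y) {s : R} (hs : d (d s) = 0) :
    IsTopologicallyNilpotent (d s) :=
  squeeze_zero_norm' ((Filter.eventually_gt_atTop 0).mono fun _ hn ↦
      norm_apply_pow_le_div_factorial leibniz hs hn)
    (FloorSemiring.tendsto_pow_div_factorial_atTop (‖d‖ * ‖s‖))

end BoundedDerivations

/-- The **Kleinecke–Shirokov theorem**. -/
theorem isTopologicallyNilpotent_lie (𝕜 : Type*) {R : Type*} [RCLike 𝕜] [NormedRing R]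
    [NormedAlgebra 𝕜 R] {t s : R} (h : Commute t ⁅t, s⁆) :
    IsTopologicallyNilpotent ⁅t, s⁆ := by
  let ad : R →L[𝕜] R := ContinuousLinearMap.mul 𝕜 R t - (ContinuousLinearMap.mul 𝕜 R).flip t
  have ad_apply (x : R) : ad x = ⁅t, x⁆ := rfl
  have leibniz (x y : R) : ad (x * y) = ad x * y + x * ad y := by
    simp only [ad_apply, Ring.lie_def]
    noncomm_ring
  exact isTopologicallyNilpotent_apply_of_leibniz leibniz (s := s) h.lie_eq

lemma isUnit_one_sub_of_isTopologicallyNilpotent {R : Type*} [NormedRing R]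
    [HasSummableGeomSeries R] {x : R} (hx : IsTopologicallyNilpotent x) : IsUnit (1 - x) := by
  obtain ⟨n, hn⟩ : ∃ n, ‖x ^ n‖ < 1 :=
    (hx.norm.eventually_lt_const (by simp)).exists
  have hcomm : Commute (1 - x) (∑ i ∈ Finset.range n, x ^ i) :=
    (mul_neg_geom_sum x n).trans (geom_sum_mul_neg x n).symm
  have hunit : IsUnit ((1 - x) * ∑ i ∈ Finset.range n, x ^ i) :=
    mul_neg_geom_sum x n ▸ isUnit_one_sub_of_norm_lt_one hn
  exact (hcomm.isUnit_mul_iff.1 hunit).1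

theorem exists_quasiInverse_of_lie_mulLeft_eq_mulRight {𝕜 X : Type*} [RCLike 𝕜]
    [NormedAddCommGroup X] [NormedSpace 𝕜 X] [CompleteSpace X] {m : X →L[𝕜] X →L[𝕜] X}
    (assoc : ∀ x y z, m (m x y) z = m x (m y z)) {S : X →L[𝕜] X} {t w : X}
    (hS : ∀ x, S (m t x) - m t (S x) = m x w) :
    ∃ y, y + w - m y w = 0 := by
  have hlie : ⁅m t, -S⁆ = m.flip w := by
    ext x
    simp [Ring.lie_def, ← hS, neg_add_eq_sub]
  have hcommute : Commute (m t) ⁅m t, -S⁆ :=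
    hlie ▸ ContinuousLinearMap.ext fun x ↦ (assoc t x w).symm
  have hunit : IsUnit (1 - m.flip w) :=
    isUnit_one_sub_of_isTopologicallyNilpotent (hlie ▸ isTopologicallyNilpotent_lie 𝕜 hcommute)
  obtain ⟨y, hy⟩ : ∃ y, y - m y w = -w :=
    (ContinuousLinearMap.isUnit_iff_bijective.1 hunit).2 (-w)
  exact ⟨y, by rw [add_sub_right_comm, hy, neg_add_cancel]⟩

section BimoduleHom

/-- A bounded linear map between Banach `A`-bimodules is a bimodule homomorphism if it commutes
with both actions. The bimodules are explicit because they cannot be read off from the map. -/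
structure IsBimoduleHom (M N : BMod A) (φ : M.X →L[ℂ] N.X) : Prop where
  map_l : ∀ a x, φ (M.act.l a x) = N.act.l a (φ x)
  map_r : ∀ a x, φ (M.act.r a x) = N.act.r a (φ x)

variable {M N : BMod A} {φ : M.X →L[ℂ] N.X}

lemma IsBimoduleHom.dMap (hφ : IsBimoduleHom M N φ) :
    IsBimoduleHom N.dualObj M.dualObj (dMap φ) where
  map_l a (f : Dl N.X) :=
    ContinuousLinearMap.ext fun x ↦ congrArg f (hφ.map_r a x).symm
  map_r a (f : Dl N.X) :=
    ContinuousLinearMap.ext fun x ↦ congrArg f (hφ.map_l a x).symm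

lemma IsDerivation.comp {D : A →L[ℂ] M.X} (hD : IsDerivation M D) (hφ : IsBimoduleHom M N φ) :
    IsDerivation N (φ.comp D) := fun a b ↦ by
  simp only [ContinuousLinearMap.comp_apply, hD a b, map_add, hφ.map_l, hφ.map_r]

lemma ClosedIdeal.isBimoduleHom_subtypeL (I : ClosedIdeal A) :
    IsBimoduleHom I.toBMod (regBMod A) I.car.subtypeL :=
  ⟨fun _ _ ↦ rfl, fun _ _ ↦ rfl⟩

end BimoduleHom

section Adjoint

universe v

variable {E : Type u} {F : Type v} [SeminormedAddCommGroup E] [NormedSpace ℂ E]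
  [SeminormedAddCommGroup F] [NormedSpace ℂ F]

lemma dMap_injective_of_surjective {φ : E →L[ℂ] F} (hφ : Function.Surjective φ) :
    Function.Injective (dMap φ) := fun f g h ↦
  ContinuousLinearMap.ext fun y ↦ by
    obtain ⟨x, rfl⟩ := hφ y
    exact DFunLike.congr_fun h x

lemma dMap_subtypeL_surjective (p : Submodule ℂ E) :
    Function.Surjective (dMap p.subtypeL) := fun f ↦
  let ⟨g, hg, _⟩ := exists_extension_norm_eq p f
  ⟨g, ContinuousLinearMap.ext hg⟩

/-- The weak*-continuous extension `E** → F*` of a bounded operator `D : E → F*`. For `F = Y*` it is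
the second adjoint `D** : E** → Y****` followed by the canonical projection `Y**** → Y**`. -/
def weakStarExtension (D : E →L[ℂ] Dl F) : Dl (Dl E) →L[ℂ] Dl F :=
  dMap D.flip

end Adjoint

section ArensProduct

lemma arensMul_assoc (F G H : Dl (Dl A)) :
    arensMul A (arensMul A F G) H = arensMul A F (arensMul A G H) := by
  ext f
  refine congrArg F (ContinuousLinearMap.ext fun a ↦ ?_)
  refine congrArg G (ContinuousLinearMap.ext fun b ↦ ?_)
  refine congrArg H (ContinuousLinearMap.ext fun c ↦ ?_)
  exact congrArg f (mul_assoc a b c)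

variable {D : A →L[ℂ] Dl (Dl A)}

lemma IsDerivation.weakStarExtension_arensMul (hcomm : ∀ a b : A, a * b = b * a)
    (hD : IsDerivation ((regBMod A).iter 2) D) (a : A) (F : Dl (Dl A)) :
    weakStarExtension D (arensMul A (inclDD A a) F) =
      arensMul A (inclDD A a) (weakStarExtension D F) + arensMul A F (D a) := by
  ext f
  have hmul (b : A) : (ContinuousLinearMap.mul ℂ A).flip b = ContinuousLinearMap.mul ℂ A b :=
    ContinuousLinearMap.ext fun x ↦ hcomm x b
  have hDab (b : A) : D (a * b) f =
      D b (f.comp (ContinuousLinearMap.mul ℂ A a)) +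
        D a (f.comp (ContinuousLinearMap.mul ℂ A b)) := by
    rw [← hmul b]
    exact DFunLike.congr_fun (F := Dl (Dl A)) (hD a b) f
  have hfun : (D.flip f).comp (ContinuousLinearMap.mul ℂ A a) =
      D.flip (f.comp (ContinuousLinearMap.mul ℂ A a)) +
        arT (ContinuousLinearMap.mul ℂ A) (D a) f :=
    ContinuousLinearMap.ext hDab
  exact (congrArg F hfun).trans (map_add F _ _)

theorem IsDerivation.exists_quasiInverse_arensMul (hcomm : ∀ a b : A, a * b = b * a)
    (hD : IsDerivation ((regBMod A).iter 2) D) (a : A) (G : Dl (Dl A)) :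
    ∃ H, H + arensMul A G (D a) - arensMul A H (arensMul A G (D a)) = 0 :=
  exists_quasiInverse_of_lie_mulLeft_eq_mulRight arensMul_assoc (t := inclDD A a)
    (S := (weakStarExtension D).comp ((arensMul A).flip G)) fun F ↦ by
      simp only [ContinuousLinearMap.comp_apply, ContinuousLinearMap.flip_apply, arensMul_assoc,
        hD.weakStarExtension_arensMul hcomm, add_sub_cancel_left]

end ArensProduct

theorem two_ideally_amenable_of_semisimple_bidual_general
    {A : Type u} [NonUnitalNormedRing A] [NormedSpace ℂ A]
    [SMulCommClass ℂ A A] [IsScalarTower ℂ A A]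
    (hcomm : ∀ a b : A, a * b = b * a)
    (hss : ∀ F : Dl (Dl A),
      (∀ G : Dl (Dl A), ∃ H : Dl (Dl A),
        H + arensMul A G F - arensMul A H (arensMul A G F) = 0) → F = 0) :
    NIdeallyAmenable A 2 := by
  intro I D hD
  let j : Dl (Dl I.car) →L[ℂ] Dl (Dl A) := dMap (dMap I.car.subtypeL)
  have hjD : IsDerivation ((regBMod A).iter 2) (j.comp D) :=
    hD.comp I.isBimoduleHom_subtypeL.dMap.dMap
  have hj : Function.Injective j :=
    dMap_injective_of_surjective (dMap_subtypeL_surjective I.car)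
  have hD_zero (a : A) : D a = 0 :=
    hj ((hss _ (hjD.exists_quasiInverse_arensMul hcomm a)).trans (map_zero j).symm)
  exact ⟨0, fun a ↦ by simp only [hD_zero, map_zero, sub_zero]⟩

/-- **Corollary 3.3.** Let `A` be a commutative Arens regular Banach algebra such
that `A**` is semisimple (here: the Jacobson radical of `A**` with the Arens product
is zero, expressed via quasi-regularity).  Then `A` is `2`-ideally amenable. -/
theorem two_ideally_amenable_of_semisimple_bidual
    {A : Type u} [NonUnitalNormedRing A] [NormedSpace ℂ A]
    [SMulCommClass ℂ A A] [IsScalarTower ℂ A A] [CompleteSpace A]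
    (hcomm : ∀ a b : A, a * b = b * a)
    (hreg : ∀ F G : Dl (Dl A), arensMul A F G = arensMul₂ A F G)
    (hss : ∀ F : Dl (Dl A),
      (∀ G : Dl (Dl A), ∃ H : Dl (Dl A),
        H + arensMul A G F - arensMul A H (arensMul A G F) = 0) → F = 0) :
    NIdeallyAmenable A 2 :=
  two_ideally_amenable_of_semisimple_bidual_general hcomm hss
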